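/- arXiv:2303.13750 — 3 statements merged into one kernel-verified Lean document; each statement's English description precedes it below -/
import Mathlib

section
/- Let c ≥ 1, let y : Fin c → ℝ be a vector of logits, and let k : Fin c be an index such that y j ≤ y k for all j and y j < y k for some j (i.e., the example is correctly and strictly classified). Then for every real q > 1, the cross-entropy loss of the scaled logits strictly decreases: Real.log (∑ j, Real.exp (q * (y j - y k))) < Real.log (∑ j, Real.exp (y j - y k)). -/
theorem stmt_0 (c : ℕ) (hc : 1 ≤ c) (y : Fin c → ℝ) (k : Fin c)
    (hmax : ∀ j, y j ≤ y k) (hstrict : ∃ j, y j < y k) (q : ℝ) (hq : 1 < q) :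
    Real.log (∑ j, Real.exp (q * (y j - y k))) <
      Real.log (∑ j, Real.exp (y j - y k)) := by
  obtain ⟨i, hi⟩ := hstrict
  -- Each gap `y j - y k` is nonpositive, so scaling by `q > 1` can only shrink each summand.
  apply Real.log_lt_log
  · exact Finset.sum_pos (fun j _ => Real.exp_pos _) ⟨k, Finset.mem_univ k⟩
  · refine Finset.sum_lt_sum (fun j _ => Real.exp_le_exp.mpr ?_)
      ⟨i, Finset.mem_univ i, Real.exp_lt_exp.mpr ?_⟩
    · nlinarith [hmax j]
    · nlinarith
end

section
/- Let c ≥ 1, y : Fin c → ℝ, and k : Fin c with y j ≤ y k for all j, and suppose y j < y k for every j ≠ k (strict unique maximizer). Then the cross-entropy loss of the scaled logits tends to 0 as the scaling factor tends to infinity: Filter.Tendsto (fun q : ℝ => Real.log (∑ j, Real.exp (q * (y j - y k)))) Filter.atTop (nhds 0). -/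
theorem stmt_3 (c : ℕ) (hc : 1 ≤ c) (y : Fin c → ℝ) (k : Fin c)
    (hmax : ∀ j, y j ≤ y k) (hstrict : ∀ j, j ≠ k → y j < y k) :
    Filter.Tendsto (fun q : ℝ => Real.log (∑ j, Real.exp (q * (y j - y k))))
      Filter.atTop (nhds 0) := by
  -- The `k`-th summand is constantly `1` and every other one decays to `0`, so the sum tends
  -- to `1`, where `log` is continuous with value `0`.
  have hsum : Filter.Tendsto (fun q : ℝ => ∑ j, Real.exp (q * (y j - y k)))
      Filter.atTop (nhds (∑ j, if j = k then (1 : ℝ) else 0)) := by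
    refine tendsto_finsetSum _ fun j _ => ?_
    by_cases hj : j = k
    · simp [hj]
    · rw [if_neg hj]
      exact Real.tendsto_exp_atBot.comp
        (Filter.tendsto_id.atTop_mul_const_of_neg (sub_neg.mpr (hstrict j hj)))
  rw [Finset.sum_ite_eq' Finset.univ k, if_pos (Finset.mem_univ k)] at hsum
  simpa using hsum.log one_ne_zero
end

section
/- For natural numbers m ≠ n, the Legendre polynomials defined by the Rodrigues formula P_n(x) = (1/(2^n · n!)) · iteratedDeriv n (fun t => (t^2 - 1)^n) x are orthogonal on [-1,1] with respect to the constant weight 1: ∫ x in (-1:ℝ)..1, P_m x * P_n x = 0. -/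
/-!
Up to a constant, `P n` is the `n`-th derivative of `(X² - 1)ⁿ`, a polynomial of degree `2n` all of
whose derivatives of order `< n` vanish at `±1`. Hence moving `n` derivatives by parts from it onto
another polynomial `q` produces no boundary terms, and `∫ q · P n = 0` as soon as the `n`-th
derivative of `q` is zero (`integral_mul_iterate_derivative_eq_zero`). For `m < n` this applies to
`q = P m`, which has degree at most `m`; the remaining case is symmetric.
-/

open Polynomial in
theorem iteratedDeriv_polynomial_eval (p : ℝ[X]) (k : ℕ) :
    iteratedDeriv k (fun t : ℝ => p.eval t) = fun t => (derivative^[k] p).eval t := by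
  induction k with
  | zero => simp
  | succ k ih =>
    rw [iteratedDeriv_succ, ih, Function.iterate_succ_apply']
    funext x
    exact Polynomial.deriv _

open Polynomial in
theorem eval_iterate_derivative_sq_sub_one_pow {n k : ℕ} (hk : k < n) {a : ℝ}
    (ha : a ^ 2 = 1) :
    (derivative^[k] ((X ^ 2 - 1 : ℝ[X]) ^ n)).eval a = 0 := by
  obtain ⟨r, hr⟩ := pow_sub_dvd_iterate_derivative_pow (X ^ 2 - 1 : ℝ[X]) n k
  have h0 : n - k ≠ 0 := by omega
  simp [hr, ha, h0]

open Polynomial in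
/-- Repeated integration by parts; the boundary terms vanish because `k ≤ n`. -/
theorem integral_mul_iterate_derivative_eq_zero {n k : ℕ} (hk : k ≤ n) (q : ℝ[X])
    (hq : derivative^[k] q = 0) :
    ∫ x in (-1 : ℝ)..1, q.eval x * (derivative^[k] ((X ^ 2 - 1 : ℝ[X]) ^ n)).eval x = 0 := by
  induction k generalizing q with
  | zero =>
    have hq0 : q = 0 := hq
    simp [hq0]
  | succ k ih =>
    rw [Function.iterate_succ_apply']
    rw [intervalIntegral.integral_mul_deriv_eq_deriv_mul
      (fun x _ => q.hasDerivAt x) (fun x _ => Polynomial.hasDerivAt _ x)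
      ((Polynomial.continuous _).intervalIntegrable _ _)
      ((Polynomial.continuous _).intervalIntegrable _ _),
      eval_iterate_derivative_sq_sub_one_pow hk (by norm_num),
      eval_iterate_derivative_sq_sub_one_pow hk (by norm_num),
      ih (by omega) (derivative q) hq]
    simp

open Polynomial in
theorem integral_rodrigues_mul_eq_zero {m n : ℕ} (h : m < n) :
    ∫ x in (-1 : ℝ)..1, (derivative^[m] ((X ^ 2 - 1 : ℝ[X]) ^ m)).eval x *
      (derivative^[n] ((X ^ 2 - 1 : ℝ[X]) ^ n)).eval x = 0 := by
  apply integral_mul_iterate_derivative_eq_zero le_rfl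
  rw [← Function.iterate_add_apply]
  apply iterate_derivative_eq_zero
  have h2 : (X ^ 2 - 1 : ℝ[X]).natDegree ≤ 2 := by compute_degree
  have := natDegree_pow_le_of_le m h2
  omega

theorem stmt_10 (P : ℕ → ℝ → ℝ)
    (hP : ∀ (n : ℕ) (x : ℝ),
      P n x = (1 / (2 ^ n * (Nat.factorial n : ℝ))) *
        iteratedDeriv n (fun t : ℝ => (t ^ 2 - 1) ^ n) x)
    (m n : ℕ) (hmn : m ≠ n) :
    ∫ x in (-1:ℝ)..1, P m x * P n x = 0 := by
  wlog h : m < n generalizing m n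
  · simpa only [mul_comm] using this n m hmn.symm (by omega)
  have key : ∀ (k : ℕ) (x : ℝ), iteratedDeriv k (fun t : ℝ => (t ^ 2 - 1) ^ k) x =
      (Polynomial.derivative^[k] ((Polynomial.X ^ 2 - 1 : Polynomial ℝ) ^ k)).eval x := by
    intro k x
    have := congrFun (iteratedDeriv_polynomial_eval ((Polynomial.X ^ 2 - 1) ^ k) k) x
    simpa using this
  simp_rw [hP, key, mul_mul_mul_comm]
  rw [intervalIntegral.integral_const_mul, integral_rodrigues_mul_eq_zero h, mul_zero]
end
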